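/- arXiv:math/0010330 — 2 statements merged into one kernel-verified Lean document; each statement's English description precedes it below -/
import Mathlib

section
/- The image of the algebra homomorphism Θ : A_t → ∏_{m≥0} M_{m+1}(ℂ), Θ(Z) = (ρ_0(Z), ρ_1(Z), ρ_2(Z), …), is dense in ∏_{m≥0} M_{m+1}(ℂ) with respect to the product topology. -/
open scoped TensorProduct
open Complex

noncomputable section

/-- The four generators `X`, `Y`, `K`, `K⁻¹` of the algebra `Aₜ`. -/
inductive QGen : Type
  | X | Y | K | K'
  deriving DecidableEq

/-- The image of a generator in the free algebra on the generators. -/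
def qg (x : QGen) : FreeAlgebra ℂ QGen := FreeAlgebra.ι ℂ x

/-- The defining relations of `Aₜ`:
`KX = t²XK`, `KY = t⁻²YK`, `XY − YX = (K² − K⁻²)/(t² − t⁻²)`, `KK⁻¹ = K⁻¹K = 1`. -/
inductive QRel (t : ℂ) : FreeAlgebra ℂ QGen → FreeAlgebra ℂ QGen → Prop
  | KX : QRel t (qg .K * qg .X) ((t ^ 2 : ℂ) • (qg .X * qg .K))
  | KY : QRel t (qg .K * qg .Y) ((t⁻¹ ^ 2 : ℂ) • (qg .Y * qg .K))
  | XY : QRel t (qg .X * qg .Y - qg .Y * qg .X)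
      (((t ^ 2 - t⁻¹ ^ 2)⁻¹ : ℂ) • (qg .K * qg .K - qg .K' * qg .K'))
  | KK' : QRel t (qg .K * qg .K') 1
  | K'K : QRel t (qg .K' * qg .K) 1

/-- The algebra `Aₜ`: the quotient of the free algebra by the defining relations. -/
abbrev At (t : ℂ) : Type := RingQuot (QRel t)

/-- The generator `X` in `Aₜ`. -/
def aX (t : ℂ) : At t := RingQuot.mkAlgHom ℂ (QRel t) (qg .X)
/-- The generator `Y` in `Aₜ`. -/
def aY (t : ℂ) : At t := RingQuot.mkAlgHom ℂ (QRel t) (qg .Y)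
/-- The generator `K` in `Aₜ`. -/
def aK (t : ℂ) : At t := RingQuot.mkAlgHom ℂ (QRel t) (qg .K)
/-- The generator `K⁻¹` in `Aₜ`. -/
def aK' (t : ℂ) : At t := RingQuot.mkAlgHom ℂ (QRel t) (qg .K')

/-- The quantum integer `[n] = (t^{2n} − t^{−2n})/(t² − t⁻²)`. -/
def qint (t : ℂ) (n : ℤ) : ℂ := (t ^ (2 * n) - t ^ (-(2 * n))) / (t ^ 2 - t⁻¹ ^ 2)

/-- The matrix of `ρ_m(K)`: `K e_j = t^{m−2j} e_j`. -/
def Kmat (t : ℂ) (m : ℕ) : Matrix (Fin (m + 1)) (Fin (m + 1)) ℂ :=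
  Matrix.diagonal fun j => t ^ ((m : ℤ) - 2 * (j : ℤ))

/-- The matrix of `ρ_m(K⁻¹)`: `K⁻¹ e_j = t^{−(m−2j)} e_j`. -/
def K'mat (t : ℂ) (m : ℕ) : Matrix (Fin (m + 1)) (Fin (m + 1)) ℂ :=
  Matrix.diagonal fun j => t ^ (-((m : ℤ) - 2 * (j : ℤ)))

/-- The matrix of `ρ_m(X)`: `X e_j = [j] e_{j−1}` (with `e_{−1} = 0`). -/
def Xmat (t : ℂ) (m : ℕ) : Matrix (Fin (m + 1)) (Fin (m + 1)) ℂ :=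
  Matrix.of fun i j => if (j : ℕ) = (i : ℕ) + 1 then qint t (j : ℤ) else 0

/-- The matrix of `ρ_m(Y)`: `Y e_j = [m−j] e_{j+1}` (with `e_{m+1} = 0`). -/
def Ymat (t : ℂ) (m : ℕ) : Matrix (Fin (m + 1)) (Fin (m + 1)) ℂ :=
  Matrix.of fun i j => if (i : ℕ) = (j : ℕ) + 1 then qint t ((m : ℤ) - (j : ℤ)) else 0

/-- `ρ` is the representation `ρ_m : Aₜ → M_{m+1}(ℂ)` determined by the matrices above. -/
def IsRho (t : ℂ) (m : ℕ) (ρ : At t →ₐ[ℂ] Matrix (Fin (m + 1)) (Fin (m + 1)) ℂ) : Prop :=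
  ρ (aX t) = Xmat t m ∧ ρ (aY t) = Ymat t m ∧ ρ (aK t) = Kmat t m ∧ ρ (aK' t) = K'mat t m

lemma zpow_inj_aux {t : ℂ} (ht : t ≠ 0) (hroot : ∀ k : ℕ, 0 < k → t ^ k ≠ 1) {a : ℤ}
    (h : t ^ a = 1) : a = 0 := by
  by_contra ha
  have h1 : t ^ a.natAbs = 1 := by
    rcases Int.natAbs_eq a with h2 | h2
    · rw [h2] at h
      exact_mod_cast h
    · rw [h2, zpow_neg, inv_eq_one] at h
      exact_mod_cast h
  exact hroot _ (Int.natAbs_pos.mpr ha) h1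

lemma zpow_inj_aux2 {t : ℂ} (ht : t ≠ 0) (hroot : ∀ k : ℕ, 0 < k → t ^ k ≠ 1) {a b : ℤ}
    (h : t ^ a = t ^ b) : a = b := by
  have : t ^ (a - b) = 1 := by
    rw [zpow_sub₀ ht, h, div_self (zpow_ne_zero _ ht)]
  have := zpow_inj_aux ht hroot this
  omega

lemma den_ne {t : ℂ} (ht : t ≠ 0) (hroot : ∀ k : ℕ, 0 < k → t ^ k ≠ 1) :
    t ^ 2 - t⁻¹ ^ 2 ≠ 0 := by
  intro h
  have : t ^ (2 : ℤ) = t ^ (-2 : ℤ) := by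
    have h1 : (t ^ 2 : ℂ) = (t ^ 2)⁻¹ := by
      rw [← inv_pow]; exact sub_eq_zero.mp h
    rw [zpow_neg]
    exact_mod_cast h1
  have := zpow_inj_aux2 ht hroot this
  omega

lemma qint_ne {t : ℂ} (ht : t ≠ 0) (hroot : ∀ k : ℕ, 0 < k → t ^ k ≠ 1) {n : ℤ} (hn : n ≠ 0) :
    qint t n ≠ 0 := by
  unfold qint
  refine div_ne_zero (fun h => ?_) (den_ne ht hroot)
  have := zpow_inj_aux2 ht hroot (sub_eq_zero.mp h)
  omega

/-- The Casimir element. -/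
def casimir (t : ℂ) : At t :=
  aY t * aX t + (((t ^ 2 - t⁻¹ ^ 2) ^ 2)⁻¹ : ℂ) •
    ((t ^ 2) • (aK t * aK t) + (t⁻¹ ^ 2) • (aK' t * aK' t))

/-- The eigenvalue of the Casimir element. -/
def casval (t : ℂ) (m : ℕ) : ℂ :=
  ((t ^ 2 - t⁻¹ ^ 2) ^ 2)⁻¹ * (t ^ (2 * (m : ℤ) + 2) + t ^ (-(2 * (m : ℤ) + 2)))

lemma YX_diag (t : ℂ) (m : ℕ) : Ymat t m * Xmat t m =
    Matrix.diagonal fun j : Fin (m + 1) => qint t (j : ℤ) * qint t ((m : ℤ) - (j : ℤ) + 1) := by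
  ext i j
  rw [Matrix.mul_apply]
  simp only [Ymat, Xmat, Matrix.of_apply, Matrix.diagonal_apply]
  by_cases hij : i = j
  · subst hij
    rw [if_pos rfl]
    by_cases hi : (i : ℕ) = 0
    · rw [Finset.sum_eq_zero]
      · simp [hi, qint]
      · intro k _
        rw [if_neg (by omega), zero_mul]
    · rw [Finset.sum_eq_single (⟨(i : ℕ) - 1, by omega⟩ : Fin (m + 1))]
      · have h1 : (i : ℕ) = (i : ℕ) - 1 + 1 := by omega
        rw [if_pos h1, if_pos h1, mul_comm]
        congr 2
        simp only
        omega
      · intro k _ hk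
        have : ¬ (i : ℕ) = (k : ℕ) + 1 := fun h => hk (Fin.ext (by simp only; omega))
        rw [if_neg this, zero_mul]
      · simp
  · rw [if_neg hij]
    refine Finset.sum_eq_zero fun k _ => ?_
    by_cases h1 : (i : ℕ) = (k : ℕ) + 1
    · have : ¬ (j : ℕ) = (k : ℕ) + 1 := fun h => hij (Fin.ext (by omega))
      rw [if_neg this, mul_zero]
    · rw [if_neg h1, zero_mul]

lemma cas_scalar {t : ℂ} (ht : t ≠ 0) (m j : ℤ) :
    qint t j * qint t (m - j + 1) + ((t ^ 2 - t⁻¹ ^ 2) ^ 2)⁻¹ *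
      (t ^ 2 * (t ^ (m - 2 * j) * t ^ (m - 2 * j)) +
        t⁻¹ ^ 2 * (t ^ (-(m - 2 * j)) * t ^ (-(m - 2 * j)))) =
    ((t ^ 2 - t⁻¹ ^ 2) ^ 2)⁻¹ * (t ^ (2 * m + 2) + t ^ (-(2 * m + 2))) := by
  unfold qint
  rw [div_mul_div_comm, ← sq (t ^ 2 - t⁻¹ ^ 2), div_eq_inv_mul, ← mul_add]
  congr 1
  have e2 : (t ^ 2 : ℂ) = t ^ (2 : ℤ) := by norm_cast
  have e2' : (t⁻¹ ^ 2 : ℂ) = t ^ (-2 : ℤ) := by rw [inv_pow, zpow_neg]; norm_cast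
  rw [e2, e2']
  simp only [sub_mul, mul_sub, ← zpow_add₀ ht]
  ring_nf

lemma rho_casimir {t : ℂ} (ht : t ≠ 0) (m : ℕ)
    (ρ : At t →ₐ[ℂ] Matrix (Fin (m + 1)) (Fin (m + 1)) ℂ) (hρ : IsRho t m ρ) :
    ρ (casimir t) = algebraMap ℂ _ (casval t m) := by
  obtain ⟨hX, hY, hK, hK'⟩ := hρ
  simp only [casimir, map_add, map_mul, map_smul, hX, hY, hK, hK', YX_diag, Kmat, K'mat,
    Matrix.diagonal_mul_diagonal, ← Matrix.diagonal_smul, Matrix.diagonal_add]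
  rw [Matrix.algebraMap_eq_diagonal]
  congr 1
  funext j
  have := cas_scalar ht m j
  simpa [casval] using this

lemma casval_inj {t : ℂ} (ht : t ≠ 0) (hroot : ∀ k : ℕ, 0 < k → t ^ k ≠ 1) :
    Function.Injective (casval t) := by
  intro a b h
  unfold casval at h
  have h := mul_left_cancel₀ (inv_ne_zero (pow_ne_zero 2 (den_ne ht hroot))) h
  rw [zpow_neg, zpow_neg] at h
  set u := t ^ (2 * (a : ℤ) + 2) with hu
  set v := t ^ (2 * (b : ℤ) + 2) with hv
  have hu0 : u ≠ 0 := zpow_ne_zero _ ht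
  have hv0 : v ≠ 0 := zpow_ne_zero _ ht
  have h3 : (u - v) * (u * v - 1) = 0 := by
    field_simp at h
    linear_combination h
  rcases mul_eq_zero.mp h3 with h4 | h4
  · have := zpow_inj_aux2 ht hroot (sub_eq_zero.mp h4)
    omega
  · rw [hu, hv, ← zpow_add₀ ht] at h4
    have := zpow_inj_aux ht hroot (sub_eq_zero.mp h4)
    omega

/-- Projections onto the isotypic parts. -/
lemma exists_proj {t : ℂ} (ht : t ≠ 0) (hroot : ∀ k : ℕ, 0 < k → t ^ k ≠ 1)
    (ρ : ∀ m : ℕ, At t →ₐ[ℂ] Matrix (Fin (m + 1)) (Fin (m + 1)) ℂ)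
    (hρ : ∀ m, IsRho t m (ρ m)) (I : Finset ℕ) (m : ℕ) (hm : m ∈ I) :
    ∃ P : At t, ρ m P = 1 ∧ ∀ n ∈ I, n ≠ m → ρ n P = 0 := by
  refine ⟨Polynomial.aeval (casimir t) (Lagrange.basis I (casval t) m), ?_, ?_⟩
  · rw [← Polynomial.aeval_algHom_apply, rho_casimir ht m _ (hρ m),
      Polynomial.aeval_algebraMap_apply, Polynomial.coe_aeval_eq_eval,
      Lagrange.eval_basis_self (casval_inj ht hroot).injOn hm, map_one]
  · intro n hn hnm
    rw [← Polynomial.aeval_algHom_apply, rho_casimir ht n _ (hρ n),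
      Polynomial.aeval_algebraMap_apply, Polynomial.coe_aeval_eq_eval,
      Lagrange.eval_basis_of_ne hnm.symm hn, map_zero]

lemma aeval_diagonal_aux {n : ℕ} (d : Fin n → ℂ) (p : Polynomial ℂ) :
    Polynomial.aeval (Matrix.diagonal d) p = Matrix.diagonal fun i => p.eval (d i) := by
  induction p using Polynomial.induction_on' with
  | add p q hp hq => simp [hp, hq, Matrix.diagonal_add]
  | monomial k a =>
    simp [Polynomial.aeval_monomial, Matrix.diagonal_pow, Matrix.algebraMap_eq_diagonal,
      Matrix.diagonal_mul_diagonal]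

lemma rho_surj {t : ℂ} (ht : t ≠ 0) (hroot : ∀ k : ℕ, 0 < k → t ^ k ≠ 1) (m : ℕ)
    (ρ : At t →ₐ[ℂ] Matrix (Fin (m + 1)) (Fin (m + 1)) ℂ) (hρ : IsRho t m ρ) :
    Function.Surjective ρ := by
  obtain ⟨hX, hY, hK, hK'⟩ := hρ
  have mX : Xmat t m ∈ ρ.range := ⟨_, hX⟩
  have mY : Ymat t m ∈ ρ.range := ⟨_, hY⟩
  have mK : Kmat t m ∈ ρ.range := ⟨_, hK⟩
  have hd : ∀ j : Fin (m + 1), Matrix.single j j (1 : ℂ) ∈ ρ.range := by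
    intro j
    set d : Fin (m + 1) → ℂ := fun j => t ^ ((m : ℤ) - 2 * (j : ℤ)) with hdd
    have hinj : Function.Injective d := by
      intro a b hab
      have := zpow_inj_aux2 ht hroot hab
      exact Fin.ext (by omega)
    have h1 : Polynomial.aeval (Kmat t m) (Lagrange.basis Finset.univ d j) ∈ ρ.range :=
      ⟨Polynomial.aeval (aK t) (Lagrange.basis Finset.univ d j), by
        rw [← hK]; exact (Polynomial.aeval_algHom_apply ρ _ _).symm⟩
    convert h1 using 1
    rw [Kmat, aeval_diagonal_aux]
    ext a b
    rw [Matrix.diagonal_apply, Matrix.single_apply]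
    by_cases hab : a = b
    · subst hab
      by_cases haj : j = a
      · subst haj
        simp only [and_self, if_true]
        exact (Lagrange.eval_basis_self hinj.injOn (Finset.mem_univ _)).symm
      · simp only [haj, and_self, if_true, if_false]
        exact (Lagrange.eval_basis_of_ne (v := d) haj (Finset.mem_univ _)).symm
    · rw [if_neg hab, if_neg (by rintro ⟨rfl, rfl⟩; exact hab rfl)]
  have key : ∀ (M : Matrix (Fin (m + 1)) (Fin (m + 1)) ℂ), M ∈ ρ.range → ∀ i j, M i j ≠ 0 →
      Matrix.single i j (1 : ℂ) ∈ ρ.range := by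
    intro M hM i j hij
    have h1 := ρ.range.smul_mem (ρ.range.mul_mem (ρ.range.mul_mem (hd i) hM) (hd j)) (M i j)⁻¹
    convert h1 using 1
    rw [Matrix.single_mul_mul_single]
    simp [Matrix.smul_single, hij]
  have up : ∀ k : ℕ, ∀ i j : Fin (m + 1), (j : ℕ) = i + k →
      Matrix.single i j (1 : ℂ) ∈ ρ.range ∧ Matrix.single j i (1 : ℂ) ∈ ρ.range := by
    intro k
    induction k with
    | zero =>
      intro i j h
      obtain rfl : i = j := Fin.ext (by omega)
      exact ⟨hd i, hd i⟩
    | succ k ih =>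
      intro i j h
      let l : Fin (m + 1) := ⟨i + k, by omega⟩
      obtain ⟨h1, h2⟩ := ih i l rfl
      have hlj : (j : ℕ) = (l : ℕ) + 1 := by simp only [l]; omega
      have h3 : Matrix.single l j (1 : ℂ) ∈ ρ.range := by
        refine key _ mX l j ?_
        simp only [Xmat, Matrix.of_apply]
        rw [if_pos hlj]
        exact qint_ne ht hroot (by omega)
      have h4 : Matrix.single j l (1 : ℂ) ∈ ρ.range := by
        refine key _ mY j l ?_
        simp only [Ymat, Matrix.of_apply]
        rw [if_pos hlj]
        exact qint_ne ht hroot (by omega)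
      constructor
      · simpa using ρ.range.mul_mem h1 h3
      · simpa using ρ.range.mul_mem h4 h2
  intro M
  change M ∈ ρ.range
  rw [Matrix.matrix_eq_sum_single M]
  refine Subalgebra.sum_mem _ fun i _ => Subalgebra.sum_mem _ fun j _ => ?_
  have h1 : Matrix.single i j (1 : ℂ) ∈ ρ.range := by
    rcases le_total (i : ℕ) j with h | h
    · exact (up (j - i) i j (by omega)).1
    · exact (up (i - j) j i (by omega)).2
  have := ρ.range.smul_mem h1 (M i j)
  simpa [Matrix.smul_single] using this

/-- The image of `Θ : Aₜ → ∏_{m≥0} M_{m+1}(ℂ)` is dense in the product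
topology (each matrix algebra with its standard topology). -/
theorem stmt4 (t : ℂ) (ht : t ≠ 0) (hroot : ∀ k : ℕ, 0 < k → t ^ k ≠ 1)
    (ρ : ∀ m : ℕ, At t →ₐ[ℂ] Matrix (Fin (m + 1)) (Fin (m + 1)) ℂ)
    (hρ : ∀ m, IsRho t m (ρ m)) :
    DenseRange (fun Z : At t => (fun m : ℕ => ρ m Z :
      ∀ m : ℕ, Matrix (Fin (m + 1)) (Fin (m + 1)) ℂ)) := by
  choose W hW using fun (x : ∀ m : ℕ, Matrix (Fin (m + 1)) (Fin (m + 1)) ℂ) m =>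
    rho_surj ht hroot m (ρ m) (hρ m) (x m)
  intro x
  rw [mem_closure_iff]
  intro U hU hx
  obtain ⟨I, u, hu, hsub⟩ := isOpen_pi_iff.mp hU x hx
  choose! P hP1 hP0 using fun m (hm : m ∈ I) => exists_proj ht hroot ρ hρ I m hm
  refine ⟨_, hsub ?_, ⟨∑ m ∈ I, P m * W x m, rfl⟩⟩
  intro n hn
  have hn' : n ∈ I := hn
  have : ρ n (∑ m ∈ I, P m * W x m) = x n := by
    rw [map_sum, Finset.sum_eq_single n]
    · rw [map_mul, hP1 n hn', one_mul, hW]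
    · intro b hb hbn
      rw [map_mul, hP0 b hb n hn' hbn.symm, zero_mul]
    · intro h
      exact absurd hn' h
  simp only [this]
  exact (hu n hn').2

end
end

section
/- For every n ≥ 1 there exists a unique element f_n ∈ End_ℂ((ℂ²)^{⊗n}) such that: f_n lies in the unital subalgebra generated by E_1, …, E_{n−1}; f_n² = f_n ≠ 0; and E_i f_n = f_n E_i = 0 for all 1 ≤ i ≤ n−1. (This f_n is the image of the n-th Jones–Wenzl idempotent.) -/
open scoped TensorProduct
open Complex

noncomputable section

/-- The `n`-fold tensor power `1̲^{⊗n} = (ℂ²)^{⊗n}`, realized concretely as the space of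
ℂ-valued functions on the set of multi-indices `(Fin 2)ⁿ` (the basis vector
`e_{s 0} ⊗ ⋯ ⊗ e_{s (n−1)}` corresponds to the delta function at `s`). -/
abbrev Vn (n : ℕ) : Type := (Fin n → Fin 2) → ℂ

/-- Pointwise multiplication by a fixed function, as a linear endomorphism. -/
def ptwiseMul {α : Type} (c : α → ℂ) : (α → ℂ) →ₗ[ℂ] (α → ℂ) where
  toFun f := fun u => c u * f u
  map_add' f g := by funext u; simp [mul_add]
  map_smul' r f := by funext u; simp [smul_eq_mul]; ring

/-- The coefficients of `μ`: `μ(e_a ⊗ e_b) = muC a b`, i.e. `μ(e_{1/2}⊗e_{−1/2}) = it`,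
`μ(e_{−1/2}⊗e_{1/2}) = −it⁻¹`, `0` otherwise (recall `e_{1/2} = e₀`, `e_{−1/2} = e₁`). -/
def muC (t : ℂ) : Fin 2 → Fin 2 → ℂ :=
  ![![0, Complex.I * t], ![-(Complex.I * t⁻¹), 0]]

/-- The coefficients of `η`: `η(1) = ∑_{a,b} etaC a b • e_a ⊗ e_b`, i.e.
`η(1) = it·e_{1/2}⊗e_{−1/2} − it⁻¹·e_{−1/2}⊗e_{1/2}`. -/
def etaC (t : ℂ) : Fin 2 → Fin 2 → ℂ :=
  ![![0, Complex.I * t], ![-(Complex.I * t⁻¹), 0]]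

/-- The Temperley–Lieb generator `E = id^{⊗i} ⊗ (η∘μ) ⊗ id^{⊗(n−i−2)}` acting on
`1̲^{⊗n}`, where `η∘μ` acts on the tensor factors in positions `i` and `i+1`
(`0`-indexed; this is `E_{i+1}` in the `1`-indexed labelling). On basis vectors,
`E (e_{s}) = μ(e_{s i} ⊗ e_{s (i+1)}) · ∑_{a b} etaC a b • e_{s[i:=a][i+1:=b]}`,
which in function coordinates is the formula below. -/
def TLE (t : ℂ) (n i : ℕ) (h : i + 1 < n) : Module.End ℂ (Vn n) :=
  (ptwiseMul fun u => etaC t (u ⟨i, Nat.lt_of_succ_lt h⟩) (u ⟨i + 1, h⟩)) ∘ₗ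
    ∑ a : Fin 2, ∑ b : Fin 2, muC t a b •
      LinearMap.funLeft ℂ ℂ (fun u =>
        Function.update (Function.update u (⟨i, Nat.lt_of_succ_lt h⟩ : Fin n) a)
          (⟨i + 1, h⟩ : Fin n) b)

/-- Chebyshev-type sequence: `chU δ k` is the `k`-th quantum integer with `[2] = δ`. -/
def chU (δ : ℂ) : ℕ → ℂ
  | 0 => 0
  | 1 => 1
  | (k + 2) => δ * chU δ (k + 1) - chU δ k

/-- The Jones–Wenzl recursion for a sequence `e` of elements of an algebra. -/
def jwP {A : Type*} [Ring A] [Algebra ℂ A] (δ : ℂ) (e : ℕ → A) : ℕ → A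
  | 0 => 1
  | (m + 1) => jwP δ e m -
      (chU δ (m + 1) / chU δ (m + 2)) • (jwP δ e m * e m * jwP δ e m)

lemma jwP_mem {A : Type*} [Ring A] [Algebra ℂ A] (δ : ℂ) (e : ℕ → A) (S : Subalgebra ℂ A)
    (m : ℕ) (hS : ∀ i, i < m → e i ∈ S) : jwP δ e m ∈ S := by
  induction m with
  | zero => exact S.one_mem
  | succ m ih =>
    have h := ih fun i hi => hS i (by omega)
    exact S.sub_mem h (S.smul_mem (S.mul_mem (S.mul_mem h (hS m (by omega))) h) _)

lemma jwP_comm {A : Type*} [Ring A] [Algebra ℂ A] (δ : ℂ) (e : ℕ → A) (x : A)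
    (m : ℕ) (hS : ∀ i, i < m → e i * x = x * e i) : jwP δ e m * x = x * jwP δ e m := by
  have := jwP_mem δ e (Subalgebra.centralizer ℂ {x}) m (fun i hi => by
    rw [Subalgebra.mem_centralizer_iff]
    intro g hg
    rw [Set.mem_singleton_iff.1 hg]
    exact (hS i hi).symm)
  rw [Subalgebra.mem_centralizer_iff] at this
  exact (this x rfl).symm

lemma jwP_main {A : Type*} [Ring A] [Algebra ℂ A] (δ : ℂ) (e : ℕ → A) (N : ℕ)
    (hU : ∀ k, chU δ (k + 1) ≠ 0)
    (h1 : ∀ i, i < N → e i * e i = δ • e i)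
    (h2 : ∀ i, i + 1 < N → e (i + 1) * e i * e (i + 1) = e (i + 1))
    (h3 : ∀ i j, i + 2 ≤ j → j < N → e i * e j = e j * e i) (m : ℕ) (hm : m ≤ N) :
    jwP δ e m * jwP δ e m = jwP δ e m ∧
    jwP δ e m * jwP δ e (m - 1) = jwP δ e m ∧
    jwP δ e (m - 1) * jwP δ e m = jwP δ e m ∧
    (∀ i, i < m → e i * jwP δ e m = 0 ∧ jwP δ e m * e i = 0) ∧
    (m < N → e m * jwP δ e m * e m =
      (chU δ (m + 2) / chU δ (m + 1)) • (jwP δ e (m - 1) * e m)) := by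
  induction m with
  | zero =>
    refine ⟨by simp [jwP], by simp [jwP], by simp [jwP], by simp, ?_⟩
    intro h
    simp [jwP, chU, h1 0 h]
  | succ m ih =>
    obtain ⟨pp, pq, qp, ep, epe⟩ := ih (by omega)
    replace epe := epe (by omega)
    have hPe : m + 1 < N → jwP δ e m * e (m + 1) = e (m + 1) * jwP δ e m := fun h =>
      jwP_comm δ e _ m fun i hi => h3 i (m + 1) (by omega) h
    have hQe : jwP δ e (m - 1) * e m = e m * jwP δ e (m - 1) :=
      jwP_comm δ e _ (m - 1) fun i hi => h3 i m (by omega) (by omega)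
    have hrs : (chU δ (m + 1) / chU δ (m + 2)) * (chU δ (m + 2) / chU δ (m + 1)) = 1 := by
      have := hU m
      have := hU (m + 1)
      field_simp
    have hdr : δ - chU δ (m + 1) / chU δ (m + 2) = chU δ (m + 3) / chU δ (m + 2) := by
      have := hU (m + 1)
      rw [eq_div_iff this, sub_mul, div_mul_cancel₀ _ this]
      rfl
    have hdef : jwP δ e (m + 1) = jwP δ e m -
      (chU δ (m + 1) / chU δ (m + 2)) • (jwP δ e m * e m * jwP δ e m) := rfl
    simp only [Nat.add_sub_cancel]
    generalize chU δ (m + 1) / chU δ (m + 2) = r at *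
    generalize chU δ (m + 2) / chU δ (m + 1) = s at *
    generalize jwP δ e (m + 1) = R at *
    generalize jwP δ e m = P at *
    generalize jwP δ e (m - 1) = Q at *
    have hRP : R * P = R := by
      rw [hdef, sub_mul, pp, smul_mul_assoc, mul_assoc _ P P, pp]
    have hPR : P * R = R := by
      rw [hdef, mul_sub, pp, mul_smul_comm, ← mul_assoc, ← mul_assoc, pp]
    have heR : e m * R = 0 := by
      rw [hdef, mul_sub, mul_smul_comm, ← mul_assoc, ← mul_assoc, epe, smul_mul_assoc, smul_smul,
        hrs, one_smul, hQe, mul_assoc, qp, sub_self]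
    have hRe : R * e m = 0 := by
      have : P * e m * P * e m = s • (P * e m) := by
        rw [mul_assoc, mul_assoc, ← mul_assoc (e m), epe, mul_smul_comm, ← mul_assoc, pq]
      rw [hdef, sub_mul, smul_mul_assoc, this, smul_smul, hrs, one_smul, sub_self]
    refine ⟨?_, hRP, hPR, ?_, ?_⟩
    · have : P * e m * P * R = 0 := by rw [mul_assoc, hPR, mul_assoc, heR, mul_zero]
      nth_rewrite 1 [hdef]
      rw [sub_mul, smul_mul_assoc, this, hPR, smul_zero, sub_zero]
    · intro i hi
      rcases Nat.lt_succ_iff_lt_or_eq.1 hi with h | rfl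
      · exact ⟨by rw [← hPR, ← mul_assoc, (ep i h).1, zero_mul],
          by rw [← hRP, mul_assoc, (ep i h).2, mul_zero]⟩
      · exact ⟨heR, hRe⟩
    · intro h
      have c := hPe h
      have k1 : e (m + 1) * P * e (m + 1) = δ • (P * e (m + 1)) := by
        rw [← c, mul_assoc, h1 _ h, mul_smul_comm]
      have k2 : e (m + 1) * (P * e m * P) * e (m + 1) = P * e (m + 1) := by
        calc e (m + 1) * (P * e m * P) * e (m + 1)
            = (e (m + 1) * P) * e m * (P * e (m + 1)) := by simp only [mul_assoc]
          _ = P * (e (m + 1) * e m * e (m + 1)) * P := by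
              rw [← c, c]; nth_rewrite 1 [← c]; simp only [mul_assoc]
          _ = P * e (m + 1) := by rw [h2 m h, mul_assoc, ← c, ← mul_assoc, pp]
      rw [hdef, mul_sub, sub_mul, mul_smul_comm, smul_mul_assoc, k1, k2, ← sub_smul, hdr]

lemma chU_formula (q : ℂ) (hq : q ≠ 0) (k : ℕ) :
    chU (q + q⁻¹) k * (q - q⁻¹) = q ^ k - q⁻¹ ^ k ∧
    chU (q + q⁻¹) (k + 1) * (q - q⁻¹) = q ^ (k + 1) - q⁻¹ ^ (k + 1) := by
  induction k with
  | zero => simp [chU]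
  | succ k ih =>
    refine ⟨ih.2, ?_⟩
    have : chU (q + q⁻¹) (k + 1 + 1) = (q + q⁻¹) * chU (q + q⁻¹) (k + 1) - chU (q + q⁻¹) k := rfl
    rw [this, sub_mul, mul_assoc, ih.1, ih.2]
    have h : q * q⁻¹ = 1 := mul_inv_cancel₀ hq
    generalize q⁻¹ = p at *
    linear_combination (p ^ k - q ^ k) * (-h)

lemma chU_ne (t : ℂ) (ht : t ≠ 0) (hroot : ∀ k : ℕ, 0 < k → t ^ k ≠ 1) (k : ℕ) :
    chU (-(t ^ 2 + t⁻¹ ^ 2)) (k + 1) ≠ 0 := by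
  intro h
  have hq : -t ^ 2 ≠ 0 := by simpa using ht
  have hd : -(t ^ 2 + t⁻¹ ^ 2) = (-t ^ 2) + (-t ^ 2)⁻¹ := by
    rw [← neg_inv, inv_pow]; ring
  have := (chU_formula (-t ^ 2) hq k).2
  rw [← hd, h, zero_mul, eq_comm, sub_eq_zero, inv_pow] at this
  replace this := (congrArg (· * (-t ^ 2) ^ (k + 1)) this).trans (inv_mul_cancel₀ (pow_ne_zero _ hq))
  apply hroot (4 * (k + 1)) (by omega)
  rw [← this, ← mul_pow, pow_mul]
  congr 1
  ring

lemma TLE_apply (t : ℂ) (n i : ℕ) (h : i + 1 < n) (f : Vn n) (u : Fin n → Fin 2) :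
    TLE t n i h f u = etaC t (u ⟨i, Nat.lt_of_succ_lt h⟩) (u ⟨i + 1, h⟩) *
      ∑ a : Fin 2, ∑ b : Fin 2, muC t a b *
        f (Function.update (Function.update u (⟨i, Nat.lt_of_succ_lt h⟩ : Fin n) a)
          (⟨i + 1, h⟩ : Fin n) b) := by
  simp [TLE, ptwiseMul, LinearMap.funLeft]

lemma TLE_sq (t : ℂ) (ht : t ≠ 0) (n i : ℕ) (h : i + 1 < n) :
    TLE t n i h * TLE t n i h = (-(t ^ 2 + t⁻¹ ^ 2)) • TLE t n i h := by
  refine LinearMap.ext fun f => funext fun u => ?_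
  simp only [Module.End.mul_apply, LinearMap.smul_apply, Pi.smul_apply, smul_eq_mul]
  rw [TLE_apply]
  simp only [TLE_apply]
  have hne : (⟨i, Nat.lt_of_succ_lt h⟩ : Fin n) ≠ ⟨i + 1, h⟩ := by simp
  generalize (⟨i, Nat.lt_of_succ_lt h⟩ : Fin n) = x at *
  generalize (⟨i + 1, h⟩ : Fin n) = y at *
  simp only [Function.update_self, Function.update_of_ne hne]
  have key : ∀ a b c d, Function.update (Function.update (Function.update (Function.update u x a) y b) x c) y d
      = Function.update (Function.update u x c) y d := by
    intro a b c d
    rw [Function.update_comm hne, Function.update_idem, Function.update_comm hne.symm, Function.update_idem]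
  simp only [key]
  have hI : Complex.I * Complex.I = -1 := Complex.I_mul_I
  generalize etaC t (u x) (u y) = C
  simp [Fin.sum_univ_two, muC, etaC]
  rw [← inv_pow]
  generalize t⁻¹ = s
  linear_combination C * I * (t * f (Function.update (Function.update u x 0) y 1) -
    s * f (Function.update (Function.update u x 1) y 0)) * (t ^ 2 + s ^ 2) * hI

lemma TLE_far (t : ℂ) (n i j : ℕ) (h : i + 1 < n) (h' : j + 1 < n) (hij : i + 2 ≤ j) :
    TLE t n i h * TLE t n j h' = TLE t n j h' * TLE t n i h := by
  refine LinearMap.ext fun f => funext fun u => ?_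
  simp only [Module.End.mul_apply]
  rw [TLE_apply, TLE_apply]
  simp only [TLE_apply]
  have n1 : (⟨i, Nat.lt_of_succ_lt h⟩ : Fin n) ≠ ⟨j, Nat.lt_of_succ_lt h'⟩ := by simp; omega
  have n2 : (⟨i, Nat.lt_of_succ_lt h⟩ : Fin n) ≠ ⟨j + 1, h'⟩ := by simp; omega
  have n3 : (⟨i + 1, h⟩ : Fin n) ≠ ⟨j, Nat.lt_of_succ_lt h'⟩ := by simp; omega
  have n4 : (⟨i + 1, h⟩ : Fin n) ≠ ⟨j + 1, h'⟩ := by simp; omega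
  generalize (⟨i, Nat.lt_of_succ_lt h⟩ : Fin n) = x at *
  generalize (⟨i + 1, h⟩ : Fin n) = y at *
  generalize (⟨j, Nat.lt_of_succ_lt h'⟩ : Fin n) = z at *
  generalize (⟨j + 1, h'⟩ : Fin n) = w at *
  simp only [Function.update_of_ne n1, Function.update_of_ne n2, Function.update_of_ne n3,
    Function.update_of_ne n4, Function.update_of_ne n1.symm, Function.update_of_ne n2.symm,
    Function.update_of_ne n3.symm, Function.update_of_ne n4.symm]
  have key : ∀ a b c d,
      Function.update (Function.update (Function.update (Function.update u x a) y b) z c) w d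
      = Function.update (Function.update (Function.update (Function.update u z c) w d) x a) y b := by
    intro a b c d
    rw [Function.update_comm n3, Function.update_comm n4, Function.update_comm n1,
      Function.update_comm n2]
  simp only [key, Fin.sum_univ_two]
  ring

lemma TLE_braid (t : ℂ) (ht : t ≠ 0) (n i : ℕ) (h : i + 1 < n) (h' : i + 1 + 1 < n) :
    TLE t n (i + 1) h' * TLE t n i h * TLE t n (i + 1) h' = TLE t n (i + 1) h' := by
  refine LinearMap.ext fun f => funext fun u => ?_
  simp only [Module.End.mul_apply]
  rw [TLE_apply, TLE_apply]
  simp only [TLE_apply]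
  have n1 : (⟨i, Nat.lt_of_succ_lt h⟩ : Fin n) ≠ ⟨i + 1, h⟩ := by simp
  have n2 : (⟨i, Nat.lt_of_succ_lt h⟩ : Fin n) ≠ ⟨i + 1 + 1, h'⟩ := by simp; omega
  have n3 : (⟨i + 1, h⟩ : Fin n) ≠ ⟨i + 1 + 1, h'⟩ := by simp
  generalize (⟨i, Nat.lt_of_succ_lt h⟩ : Fin n) = x at *
  generalize (⟨i + 1, h⟩ : Fin n) = y at *
  generalize (⟨i + 1 + 1, h'⟩ : Fin n) = z at *
  simp only [Function.update_self, Function.update_of_ne n1, Function.update_of_ne n2,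
    Function.update_of_ne n3, Function.update_of_ne n1.symm, Function.update_of_ne n2.symm,
    Function.update_of_ne n3.symm]
  have key : ∀ a b c d p q,
      Function.update (Function.update (Function.update (Function.update (Function.update
        (Function.update u y a) z b) x c) y d) y p) z q
      = Function.update (Function.update (Function.update u x c) y p) z q := by
    intro a b c d p q
    funext w
    simp only [Function.update_apply]
    split_ifs <;> rfl
  simp only [key]
  have hx : ∀ c, u x = c → Function.update u x c = u := by
    rintro c rfl
    exact Function.update_eq_self x u
  have h01 : u x = 0 ∨ u x = 1 := by omega
  have hI : Complex.I * Complex.I = -1 := Complex.I_mul_I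
  have htt : t * t⁻¹ = 1 := mul_inv_cancel₀ ht
  have hk : I * t * (I * t⁻¹) = -1 := by linear_combination t * t⁻¹ * hI - htt
  generalize etaC t (u y) (u z) = C
  rcases h01 with h0 | h0
  · simp [Fin.sum_univ_two, muC, etaC, h0, hx _ h0]
    left
    generalize I * t * f _ + -(I * t⁻¹ * f _) = B
    linear_combination B * (I * t * (I * t⁻¹) - 1) * hk
  · simp [Fin.sum_univ_two, muC, etaC, h0, hx _ h0]
    left
    generalize I * t * f _ + -(I * t⁻¹ * f _) = B
    linear_combination B * (I * t * (I * t⁻¹) - 1) * hk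

lemma TLE_vac (t : ℂ) (n i : ℕ) (h : i + 1 < n) :
    TLE t n i h (Pi.single (fun _ => 0) 1) = 0 := by
  funext u
  rw [TLE_apply]
  have hne : (⟨i, Nat.lt_of_succ_lt h⟩ : Fin n) ≠ ⟨i + 1, h⟩ := by simp
  have key : ∀ a b, (a ≠ 0 ∨ b ≠ 0) → (Pi.single (fun _ => 0) 1 : Vn n)
      (Function.update (Function.update u (⟨i, Nat.lt_of_succ_lt h⟩ : Fin n) a)
          (⟨i + 1, h⟩ : Fin n) b) = 0 := by
    intro a b hab
    rw [Pi.single_apply, if_neg]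
    intro e
    have e1 := congrFun e ⟨i, Nat.lt_of_succ_lt h⟩
    have e2 := congrFun e ⟨i + 1, h⟩
    simp at e1 e2
    tauto
  simp [Fin.sum_univ_two, key, muC]


/-- For every `n ≥ 1` there exists a unique `f ∈ End((ℂ²)^{⊗n})` which
lies in the unital subalgebra generated by `E_1, …, E_{n−1}`, is a nonzero idempotent,
and kills all the `E_i` on both sides: the Jones–Wenzl idempotent `f_n`. -/
theorem stmt11 (t : ℂ) (ht : t ≠ 0) (hroot : ∀ k : ℕ, 0 < k → t ^ k ≠ 1) (n : ℕ)
    (hn : 1 ≤ n) :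
    ∃! f : Module.End ℂ (Vn n),
      f ∈ Algebra.adjoin ℂ
          {g : Module.End ℂ (Vn n) | ∃ (i : ℕ) (h : i + 1 < n), g = TLE t n i h} ∧
      f * f = f ∧ f ≠ 0 ∧
      ∀ (i : ℕ) (h : i + 1 < n), TLE t n i h * f = 0 ∧ f * TLE t n i h = 0 := by
  classical
  set δ : ℂ := -(t ^ 2 + t⁻¹ ^ 2) with hδ
  let e : ℕ → Module.End ℂ (Vn n) := fun i => if h : i + 1 < n then TLE t n i h else 0
  have he : ∀ i (h : i + 1 < n), e i = TLE t n i h := fun i h => dif_pos h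
  obtain ⟨pp, -, -, ep, -⟩ := jwP_main δ e (n - 1) (chU_ne t ht hroot)
    (fun i hi => by rw [he i (by omega)]; exact TLE_sq t ht n i _)
    (fun i hi => by
      rw [he i (by omega), he (i + 1) (by omega)]; exact TLE_braid t ht n i _ _)
    (fun i j hij hj => by
      rw [he i (by omega), he j (by omega)]; exact TLE_far t n i j _ _ hij)
    (n - 1) le_rfl
  have hmem := jwP_mem δ e (Algebra.adjoin ℂ
      {g : Module.End ℂ (Vn n) | ∃ (i : ℕ) (h : i + 1 < n), g = TLE t n i h}) (n - 1)
      (fun i hi => Algebra.subset_adjoin ⟨i, by omega, he i (by omega)⟩)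
  have hvac : ∀ m, m ≤ n - 1 → jwP δ e m (Pi.single (fun _ => 0) 1) = Pi.single (fun _ => 0) 1 := by
    intro m
    induction m with
    | zero => intro _; rfl
    | succ m ih =>
      intro hm
      have h0 := ih (by omega)
      simp only [jwP, LinearMap.sub_apply, LinearMap.smul_apply, Module.End.mul_apply, h0]
      rw [he m (by omega), TLE_vac]
      simp
  have hne : jwP δ e (n - 1) ≠ 0 := by
    intro h0
    have h1 := hvac (n - 1) le_rfl
    rw [h0] at h1
    have h2 := congrFun h1 (fun _ => 0)
    simp at h2
  have scal : ∀ x ∈ Algebra.adjoin ℂ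
      {g : Module.End ℂ (Vn n) | ∃ (i : ℕ) (h : i + 1 < n), g = TLE t n i h},
      ∃ α : ℂ, ∀ g : Module.End ℂ (Vn n),
        (∀ (i : ℕ) (h : i + 1 < n), TLE t n i h * g = 0 ∧ g * TLE t n i h = 0) →
        x * g = α • g ∧ g * x = α • g := by
    intro x hx
    induction hx using Algebra.adjoin_induction with
    | mem x hx =>
      obtain ⟨i, h, rfl⟩ := hx
      exact ⟨0, fun g hg => by simpa using hg i h⟩
    | algebraMap r =>
      exact ⟨r, fun g _ => ⟨by rw [Algebra.smul_def], by rw [Algebra.smul_def, Algebra.commutes]⟩⟩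
    | add x y _ _ hx hy =>
      obtain ⟨α, hα⟩ := hx
      obtain ⟨β, hβ⟩ := hy
      exact ⟨α + β, fun g hg => ⟨by rw [add_mul, (hα g hg).1, (hβ g hg).1, add_smul],
        by rw [mul_add, (hα g hg).2, (hβ g hg).2, add_smul]⟩⟩
    | mul x y _ _ hx hy =>
      obtain ⟨α, hα⟩ := hx
      obtain ⟨β, hβ⟩ := hy
      refine ⟨α * β, fun g hg => ⟨?_, ?_⟩⟩
      · rw [mul_assoc, (hβ g hg).1, mul_smul_comm, (hα g hg).1, smul_smul, mul_comm]
      · rw [← mul_assoc, (hα g hg).2, smul_mul_assoc, (hβ g hg).2, smul_smul]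
  have unit : ∀ x : Module.End ℂ (Vn n), (x ∈ Algebra.adjoin ℂ
      {g : Module.End ℂ (Vn n) | ∃ (i : ℕ) (h : i + 1 < n), g = TLE t n i h} ∧
      x * x = x ∧ x ≠ 0 ∧
      ∀ (i : ℕ) (h : i + 1 < n), TLE t n i h * x = 0 ∧ x * TLE t n i h = 0) →
      ∀ g : Module.End ℂ (Vn n),
        (∀ (i : ℕ) (h : i + 1 < n), TLE t n i h * g = 0 ∧ g * TLE t n i h = 0) →
        x * g = g ∧ g * x = g := by
    rintro x ⟨hx, hxx, hx0, hxe⟩ g hg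
    obtain ⟨α, hα⟩ := scal x hx
    have h1 := (hα x hxe).1
    rw [hxx] at h1
    have : α = 1 := by
      exact smul_left_injective ℂ hx0 (by simpa using h1.symm : α • x = (1 : ℂ) • x)
    subst this
    simpa using hα g hg
  have hP : jwP δ e (n - 1) ∈ Algebra.adjoin ℂ
      {g : Module.End ℂ (Vn n) | ∃ (i : ℕ) (h : i + 1 < n), g = TLE t n i h} ∧
      jwP δ e (n - 1) * jwP δ e (n - 1) = jwP δ e (n - 1) ∧ jwP δ e (n - 1) ≠ 0 ∧
      ∀ (i : ℕ) (h : i + 1 < n),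
        TLE t n i h * jwP δ e (n - 1) = 0 ∧ jwP δ e (n - 1) * TLE t n i h = 0 :=
    ⟨hmem, pp, hne, fun i h => by rw [← he i h]; exact ep i (by omega)⟩
  refine ⟨jwP δ e (n - 1), hP, fun f hf => ?_⟩
  exact (unit _ hP f hf.2.2.2).2.symm.trans (unit f hf _ hP.2.2.2).1


end
end
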